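/- Let K be a field of characteristic zero, A_n(K) the Weyl algebra with a fixed partition of {1,…,n} into blocks of sizes n_1,…,n_p, E a free A_n(K)-module with free generators e_1,…,e_m, and G = {g_1,…,g_r} a finite set of nonzero elements of E. Then for every f ∈ E there exist g ∈ E and Q_1,…,Q_r ∈ A_n(K) such that f − g = Σ_{i=1}^{r} Q_i g_i and g is (<_1,…,<_p)-reduced with respect to G. -/

import Mathlib

set_option synthInstance.maxHeartbeats 400000
set_option maxHeartbeats 1000000

open MvPolynomial

noncomputable def weylGens (n : ℕ) (K : Type) [Field K] :
    Set (Module.End K (MvPolynomial (Fin n) K)) :=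
  (Set.range fun i : Fin n =>
      (LinearMap.mulLeft K (X i : MvPolynomial (Fin n) K) : Module.End K (MvPolynomial (Fin n) K))) ∪
  (Set.range fun i : Fin n => ((pderiv i).toLinearMap : Module.End K (MvPolynomial (Fin n) K)))

noncomputable def WeylAlg (n : ℕ) (K : Type) [Field K] :
    Subalgebra K (Module.End K (MvPolynomial (Fin n) K)) :=
  Algebra.adjoin K (weylGens n K)

noncomputable def wx (n : ℕ) (K : Type) [Field K] (i : Fin n) : WeylAlg n K :=
  ⟨LinearMap.mulLeft K (X i), Algebra.subset_adjoin (Set.mem_union_left _ ⟨i, rfl⟩)⟩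

noncomputable def wd (n : ℕ) (K : Type) [Field K] (i : Fin n) : WeylAlg n K :=
  ⟨(pderiv i).toLinearMap, Algebra.subset_adjoin (Set.mem_union_right _ ⟨i, rfl⟩)⟩

noncomputable def wMono (n : ℕ) (K : Type) [Field K] (α β : Fin n → ℕ) : WeylAlg n K :=
  (((List.finRange n).map fun i => wx n K i ^ α i).prod) *
  (((List.finRange n).map fun i => wd n K i ^ β i).prod)

def ordTot (n : ℕ) (α β : Fin n → ℕ) : ℕ := (∑ i, α i) + ∑ i, β i

noncomputable def bernW (n : ℕ) (K : Type) [Field K] (r : ℤ) : Submodule K (WeylAlg n K) :=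
  Submodule.span K {D | ∃ α β : Fin n → ℕ, (ordTot n α β : ℤ) ≤ r ∧ D = wMono n K α β}

noncomputable def modFil (n : ℕ) (K : Type) [Field K] (M : Type) [AddCommGroup M]
    [Module K M] [Module (WeylAlg n K) M] (m : ℕ) (g : Fin m → M) (r : ℤ) :
    Submodule K M :=
  Submodule.span K {x | ∃ i, ∃ D ∈ bernW n K r, x = D • g i}


/-- The `j`-th order of the monomial `x^α ∂^β` with respect to the partition `B`. -/
def ordBlk {n p : ℕ} (B : Fin n → Fin p) (α β : Fin n → ℕ) (j : Fin p) : ℕ :=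
  ∑ i ∈ Finset.univ.filter (fun i => B i = j), (α i + β i)

/-- An exponent pair `(α, β)` encoding the monomial `x^α ∂^β`. -/
abbrev WExp (n : ℕ) := (Fin n → ℕ) × (Fin n → ℕ)

/-- A term `θ e_i` of the free module `E`: a monomial together with the index of a
free generator. -/
abbrev WTerm (n m : ℕ) := WExp n × Fin m

/-- The `j`-th order of a term. -/
def ordT {n p m : ℕ} (B : Fin n → Fin p) (j : Fin p) (t : WTerm n m) : ℕ :=
  ordBlk B t.1.1 t.1.2 j

/-- The comparison vector of a monomial used to define the order `<_j`:
the `j`-th order, then the other orders, then the exponents of the `j`-th block,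
then the remaining exponents. -/
def keyList {n p : ℕ} (B : Fin n → Fin p) (j : Fin p) (t : WExp n) : List ℕ :=
  [ordBlk B t.1 t.2 j] ++
  (((List.finRange p).filter fun k => k ≠ j).map (ordBlk B t.1 t.2)) ++
  (((List.finRange n).filter fun i => B i = j).map t.1) ++
  (((List.finRange n).filter fun i => B i = j).map t.2) ++
  ((((List.finRange n).filter fun i => B i ≠ j).map fun i => [t.1 i, t.2 i]).flatten)

/-- The order `<_j` on monomials. -/
def monLt {n p : ℕ} (B : Fin n → Fin p) (j : Fin p) (s t : WExp n) : Prop :=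
  List.Lex (· < ·) (keyList B j s) (keyList B j t)

/-- The order `<_j` on terms of the free module. -/
def termLt {n p m : ℕ} (B : Fin n → Fin p) (j : Fin p) (s t : WTerm n m) : Prop :=
  monLt B j s.1 t.1 ∨ (s.1 = t.1 ∧ s.2 < t.2)

/-- Divisibility of terms: same free generator and componentwise smaller exponents. -/
def tdvd {n m : ℕ} (s t : WTerm n m) : Prop :=
  s.2 = t.2 ∧ s.1.1 ≤ t.1.1 ∧ s.1.2 ≤ t.1.2

/-- The quotient monomial `t/s` of two terms with `s ∣ t`. -/
def tquot {n m : ℕ} (t s : WTerm n m) : WExp n :=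
  (t.1.1 - s.1.1, t.1.2 - s.1.2)

/-- The element `θ e_i` of the free module `E = A_n(K)^m`. -/
noncomputable def termVal {n m : ℕ} (K : Type) [Field K] (t : WTerm n m) :
    Fin m → WeylAlg n K :=
  Pi.single t.2 (wMono n K t.1.1 t.1.2)

/-- `c` is the coefficient expansion of `f ∈ E` in the basis of terms. -/
def Represents {n m : ℕ} {K : Type} [Field K] (c : WTerm n m →₀ K)
    (f : Fin m → WeylAlg n K) : Prop :=
  f = c.sum fun t a => a • termVal K t

/-- `u` is the `j`-th leader of the element represented by `c`: the greatest term
appearing in it with respect to `<_j`. -/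
def IsLeader {n p m : ℕ} {K : Type} [Field K] (B : Fin n → Fin p) (j : Fin p)
    (c : WTerm n m →₀ K) (u : WTerm n m) : Prop :=
  u ∈ c.support ∧ ∀ t ∈ c.support, t ≠ u → termLt B j t u

/-- `ρ(g) ∣ ρ(f)`, where `u g`, `u f` are the leaders of `g` and `f`:
the first leaders divide and `d_j(g) ≤ d_j(f)` for all `j`. -/
def rhoDvd {n p m : ℕ} (B : Fin n → Fin p) (hp : 0 < p)
    (ug uf : Fin p → WTerm n m) : Prop :=
  tdvd (ug ⟨0, hp⟩) (uf ⟨0, hp⟩) ∧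
  ∀ j, (ordT B j (ug j) : ℤ) - (ordT B j (ug ⟨0, hp⟩) : ℤ) ≤
       (ordT B j (uf j) : ℤ) - (ordT B j (uf ⟨0, hp⟩) : ℤ)

/-- One-step `(<_k, <_{i₁}, …, <_{i_l})`-reduction of `f` to `h` modulo `g`, where `cg`
is the expansion of `g` and `ug j` its `j`-th leader. -/
def RedStep {n p m : ℕ} {K : Type} [Field K] (B : Fin n → Fin p)
    (k : Fin p) (is : List (Fin p))
    (g : Fin m → WeylAlg n K) (cg : WTerm n m →₀ K) (ug : Fin p → WTerm n m)
    (f h : Fin m → WeylAlg n K) : Prop :=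
  ∃ cf : WTerm n m →₀ K, Represents cf f ∧
    ∃ w ∈ cf.support, tdvd (ug k) w ∧
      (∀ i ∈ is, ∀ uf : WTerm n m, IsLeader B i cf uf →
        ordBlk B (tquot w (ug k)).1 (tquot w (ug k)).2 i + ordT B i (ug i) ≤
          ordT B i uf) ∧
      h = f - (cf w * (cg (ug k))⁻¹) •
        fun j => wMono n K (tquot w (ug k)).1 (tquot w (ug k)).2 * g j

/-- The element represented by `cf` is `(<_k, <_{i₁}, …, <_{i_l})`-reduced with respect to an
element with leaders `ug`. -/
def ReducedWrt {n p m : ℕ} {K : Type} [Field K] (B : Fin n → Fin p)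
    (k : Fin p) (is : List (Fin p))
    (cf : WTerm n m →₀ K) (ug : Fin p → WTerm n m) : Prop :=
  ∀ w ∈ cf.support, tdvd (ug k) w →
    ∃ i ∈ is, ∃ uf : WTerm n m, IsLeader B i cf uf ∧
      ordT B i uf <
        ordBlk B (tquot w (ug k)).1 (tquot w (ug k)).2 i + ordT B i (ug i)

/-!
Moving a derivative past powers of the variables only produces terms in which, for each `i`, the
total degree in `x_i` and `∂_i` does not grow and for some `i` drops; these are smaller for every
`<_j`. So multiplying an element by a monomial `q` multiplies its leaders by `q`, up to terms that
are smaller and of no larger orders. If `w` is the greatest reducible term of `f`, subtracting the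
multiple of `g_i` that cancels `w` only creates terms below `w` and, by the condition on orders,
raises no `ord_j` of a leader; so every reducible term of the result is below `w`. If every
element of `f + Σ A_n(K) g_i` had a reducible term, their greatest reducible terms would therefore
have no minimum for `<_k`, which is impossible because `<_k` is a well-order.
-/

section OrderedProducts

variable {ι M : Type*} [Monoid M]

theorem prod_map_mul_of_commute {f g : ι → M} (h : ∀ i j, Commute (f i) (g j)) (l : List ι) :
    (l.map fun i => f i * g i).prod = (l.map f).prod * (l.map g).prod := by
  induction l with
  | nil => simp
  | cons i l ih =>
    have hcomm : Commute (l.map f).prod (g i) := by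
      refine Commute.list_prod_left _ _ fun x hx => ?_
      obtain ⟨j, -, rfl⟩ := List.mem_map.mp hx
      exact h j i
    simp only [List.map_cons, List.prod_cons, ih, mul_assoc, hcomm.left_comm]

theorem prod_map_pow_add {y : ι → M} (hy : ∀ i j, Commute (y i) (y j)) (l : List ι)
    (a b : ι → ℕ) :
    (l.map fun i => y i ^ (a + b) i).prod =
      (l.map fun i => y i ^ a i).prod * (l.map fun i => y i ^ b i).prod := by
  simp only [Pi.add_apply, pow_add]
  exact prod_map_mul_of_commute (fun i j => (hy i j).pow_pow _ _) l

theorem prod_map_pow_single [DecidableEq ι] (y : ι → M) {l : List ι} (hl : l.Nodup) {i : ι}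
    (hi : i ∈ l) (k : ℕ) :
    (l.map fun j => y j ^ (Pi.single i k : ι → ℕ) j).prod = y i ^ k := by
  rw [List.prod_map_eq_pow_single i _ fun j hj _ => by simp [hj],
    List.count_eq_one_of_mem hl hi, pow_one, Pi.single_eq_same]

end OrderedProducts

theorem pderiv_comm {σ R : Type*} [CommSemiring R] (i j : σ) (f : MvPolynomial σ R) :
    pderiv i (pderiv j f) = pderiv j (pderiv i f) := by
  classical
  induction f using MvPolynomial.induction_on' with
  | add f g hf hg => simp only [map_add, hf, hg]
  | monomial s a =>
    rcases eq_or_ne i j with rfl | hij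
    · rfl
    · simp only [pderiv_monomial, tsub_right_comm (a := s), Finsupp.tsub_apply,
        Finsupp.single_eq_of_ne hij, Finsupp.single_eq_of_ne hij.symm, tsub_zero, mul_right_comm a]

theorem pderiv_monomial_mul {σ R : Type*} [Finite σ] [DecidableEq σ] [CommSemiring R] (i : σ)
    (a : σ → ℕ) (f : MvPolynomial σ R) :
    pderiv i (monomial (Finsupp.equivFunOnFinite.symm a) 1 * f) =
      monomial (Finsupp.equivFunOnFinite.symm a) 1 * pderiv i f +
        (a i : R) • (monomial (Finsupp.equivFunOnFinite.symm (a - Pi.single i 1)) 1 * f) := by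
  have hsub : Finsupp.equivFunOnFinite.symm a - Finsupp.single i 1 =
      Finsupp.equivFunOnFinite.symm (a - Pi.single i 1) := by
    ext j
    simp [Finsupp.single_apply, Pi.single_apply, eq_comm]
  rw [Derivation.leibniz, pderiv_monomial, hsub, one_mul, ← smul_mul_assoc, smul_monomial]
  simp [mul_comm]

section WeylAlgebra

variable {n : ℕ} {K : Type} [Field K]

theorem wx_commute (i j : Fin n) : Commute (wx n K i) (wx n K j) :=
  Subtype.ext <| LinearMap.ext fun _ => mul_left_comm _ _ _

theorem wd_commute (i j : Fin n) : Commute (wd n K i) (wd n K j) :=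
  Subtype.ext <| LinearMap.ext fun f => pderiv_comm i j f

theorem wMono_eq_mul (a b : Fin n → ℕ) : wMono n K a b = wMono n K a 0 * wMono n K 0 b := by
  simp [wMono]

theorem wMono_zero_zero : wMono n K 0 0 = 1 := by
  simp [wMono]

theorem wMono_add_zero (a a' : Fin n → ℕ) :
    wMono n K (a + a') 0 = wMono n K a 0 * wMono n K a' 0 := by
  simpa [wMono] using prod_map_pow_add wx_commute (List.finRange n) a a'

theorem wMono_zero_add (b b' : Fin n → ℕ) :
    wMono n K 0 (b + b') = wMono n K 0 b * wMono n K 0 b' := by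
  simpa [wMono] using prod_map_pow_add wd_commute (List.finRange n) b b'

theorem wMono_single_zero (i : Fin n) : wMono n K (Pi.single i 1) 0 = wx n K i := by
  simpa [wMono] using
    prod_map_pow_single (wx n K) (List.nodup_finRange n) (List.mem_finRange i) 1

theorem wMono_zero_single (i : Fin n) : wMono n K 0 (Pi.single i 1) = wd n K i := by
  simpa [wMono] using
    prod_map_pow_single (wd n K) (List.nodup_finRange n) (List.mem_finRange i) 1

theorem coe_wMono_zero_right (a : Fin n → ℕ) :
    (wMono n K a 0 : Module.End K (MvPolynomial (Fin n) K)) =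
      LinearMap.mulLeft K (monomial (Finsupp.equivFunOnFinite.symm a) 1) := by
  have hmonomial : monomial (Finsupp.equivFunOnFinite.symm a) (1 : K) =
      ((List.finRange n).map fun i => X i ^ a i).prod := by
    rw [monomial_eq, Finsupp.prod_fintype _ _ fun i => pow_zero _, ← List.ofFn_eq_map,
      List.prod_ofFn]
    simp
  have hx (i : Fin n) : (WeylAlg n K).val (wx n K i) = Algebra.lmul K _ (X i) := rfl
  change (WeylAlg n K).val (wMono n K a 0) = Algebra.lmul K _ _
  simp only [hmonomial, wMono, Pi.zero_apply, pow_zero, List.map_const', List.prod_replicate,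
    one_pow, mul_one, map_list_prod, List.map_map, Function.comp_def, map_pow, hx]

theorem wd_mul_wMono_zero (i : Fin n) (a : Fin n → ℕ) :
    wd n K i * wMono n K a 0 =
      wMono n K a 0 * wd n K i + (a i : K) • wMono n K (a - Pi.single i 1) 0 := by
  refine Subtype.ext <| LinearMap.ext fun f => ?_
  simp only [MulMemClass.coe_mul, AddMemClass.coe_add, SetLike.val_smul, coe_wMono_zero_right]
  exact pderiv_monomial_mul i a f

theorem wx_mul_wMono (i : Fin n) (t : WExp n) :
    wx n K i * wMono n K t.1 t.2 = wMono n K (Pi.single i 1 + t.1) t.2 := by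
  rw [wMono_eq_mul, wMono_eq_mul (_ + _), wMono_add_zero, wMono_single_zero, mul_assoc]

theorem wd_mul_wMono (i : Fin n) (t : WExp n) :
    wd n K i * wMono n K t.1 t.2 = wMono n K t.1 (Pi.single i 1 + t.2) +
      (t.1 i : K) • wMono n K (t.1 - Pi.single i 1) t.2 := by
  rw [wMono_eq_mul, ← mul_assoc, wd_mul_wMono_zero, add_mul, mul_assoc, ← wMono_zero_single,
    ← wMono_zero_add, ← wMono_eq_mul, smul_mul_assoc, ← wMono_eq_mul]

/-- The span of the monomials `x^α ∂^β` with `α + β < α₀ + β₀` componentwise, for `t = (α₀, β₀)`: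
the error terms that appear when a product with leading monomial `t` is put in normal order. -/
noncomputable def lowerSpan (K : Type) [Field K] (t : WExp n) : Submodule K (WeylAlg n K) :=
  Submodule.span K ((fun s : WExp n => wMono n K s.1 s.2) '' {s | s.1 + s.2 < t.1 + t.2})

theorem wMono_mem_lowerSpan {s t : WExp n} (h : s.1 + s.2 < t.1 + t.2) :
    wMono n K s.1 s.2 ∈ lowerSpan K t :=
  Submodule.subset_span ⟨s, h, rfl⟩

theorem lowerSpan_mono {s t : WExp n} (h : s.1 + s.2 ≤ t.1 + t.2) :
    lowerSpan K s ≤ lowerSpan K t :=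
  Submodule.span_mono <| Set.image_mono fun _ hu => lt_of_lt_of_le hu h

/-- `D` behaves like the monomial with exponent `s` under left multiplication of monomials, up to
lower terms. Testing `D` against all monomials makes the property multiplicative. -/
def HasLeadingExponent (D : WeylAlg n K) (s : WExp n) : Prop :=
  ∀ t : WExp n, ∃ L ∈ lowerSpan K (s + t),
    D * wMono n K t.1 t.2 = wMono n K (s + t).1 (s + t).2 + L

theorem HasLeadingExponent.mul_mem_lowerSpan {D L : WeylAlg n K} {s t : WExp n}
    (hD : HasLeadingExponent D s) (hL : L ∈ lowerSpan K t) : D * L ∈ lowerSpan K (s + t) := by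
  have hle : lowerSpan K t ≤ (lowerSpan K (s + t)).comap (LinearMap.mulLeft K D) := by
    refine Submodule.span_le.mpr ?_
    rintro _ ⟨u, hu, rfl⟩
    have hlt : (s + u).1 + (s + u).2 < (s + t).1 + (s + t).2 := by
      rw [Prod.fst_add, Prod.snd_add, Prod.fst_add, Prod.snd_add, add_add_add_comm s.1 u.1,
        add_add_add_comm s.1 t.1]
      exact (add_lt_add_iff_left _).mpr hu
    obtain ⟨L', hL', hmul⟩ := hD u
    change D * wMono n K u.1 u.2 ∈ lowerSpan K (s + t)
    exact hmul ▸ add_mem (wMono_mem_lowerSpan hlt) (lowerSpan_mono hlt.le hL')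
  exact hle hL

theorem hasLeadingExponent_one : HasLeadingExponent (1 : WeylAlg n K) 0 := fun t =>
  ⟨0, zero_mem _, by rw [one_mul, zero_add, add_zero]⟩

theorem HasLeadingExponent.mul {D D' : WeylAlg n K} {s s' : WExp n}
    (hD : HasLeadingExponent D s) (hD' : HasLeadingExponent D' s') :
    HasLeadingExponent (D * D') (s + s') := fun t => by
  obtain ⟨L', hL', hmul'⟩ := hD' t
  obtain ⟨L, hL, hmul⟩ := hD (s' + t)
  rw [add_assoc]
  exact ⟨L + D * L', add_mem hL (hD.mul_mem_lowerSpan hL'), by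
    rw [mul_assoc, hmul', mul_add, hmul, add_assoc]⟩

theorem HasLeadingExponent.pow {D : WeylAlg n K} {s : WExp n} (hD : HasLeadingExponent D s)
    (k : ℕ) : HasLeadingExponent (D ^ k) (k • s) := by
  induction k with
  | zero => simpa only [pow_zero, zero_nsmul] using hasLeadingExponent_one
  | succ k ih => simpa only [pow_succ, succ_nsmul] using ih.mul hD

theorem HasLeadingExponent.list_prod {ι : Type*} {D : ι → WeylAlg n K} {s : ι → WExp n}
    (hD : ∀ i, HasLeadingExponent (D i) (s i)) (l : List ι) :
    HasLeadingExponent (l.map D).prod (l.map s).sum := by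
  induction l with
  | nil => exact hasLeadingExponent_one
  | cons i l ih => simpa only [List.map_cons, List.prod_cons, List.sum_cons] using (hD i).mul ih

theorem hasLeadingExponent_wx (i : Fin n) :
    HasLeadingExponent (wx n K i) (Pi.single i 1, 0) := fun t =>
  ⟨0, zero_mem _, by rw [wx_mul_wMono, Prod.fst_add, Prod.snd_add, zero_add, add_zero]⟩

theorem hasLeadingExponent_wd (i : Fin n) :
    HasLeadingExponent (wd n K i) (0, Pi.single i 1) := fun t => by
  have hlt : t.1 - Pi.single i 1 + t.2 < 0 + t.1 + (Pi.single i 1 + t.2) := by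
    refine Pi.lt_def.mpr ⟨fun j => ?_, i, ?_⟩ <;> simp only [Pi.add_apply, Pi.sub_apply,
      Pi.zero_apply, Pi.single_eq_same] <;> omega
  refine ⟨(t.1 i : K) • wMono n K (t.1 - Pi.single i 1) t.2, Submodule.smul_mem _ _
    (wMono_mem_lowerSpan (s := (t.1 - Pi.single i 1, t.2)) hlt), ?_⟩
  rw [wd_mul_wMono, Prod.fst_add, Prod.snd_add, zero_add]

theorem hasLeadingExponent_wMono (s : WExp n) :
    HasLeadingExponent (wMono n K s.1 s.2) s := by
  have hx := HasLeadingExponent.list_prod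
    (fun i => (hasLeadingExponent_wx (K := K) i).pow (s.1 i)) (List.finRange n)
  have hd := HasLeadingExponent.list_prod
    (fun i => (hasLeadingExponent_wd (K := K) i).pow (s.2 i)) (List.finRange n)
  convert! hx.mul hd
  simp only [← List.ofFn_eq_map, List.sum_ofFn]
  ext i <;> simp [Prod.fst_sum, Prod.snd_sum, Finset.sum_apply, Pi.single_apply]

theorem span_range_wMono :
    Submodule.span K (Set.range fun t : WExp n => wMono n K t.1 t.2) = ⊤ := by
  set S := Submodule.span K (Set.range fun t : WExp n => wMono n K t.1 t.2)
  have hmono (a b : Fin n → ℕ) : wMono n K a b ∈ S := Submodule.subset_span ⟨(a, b), rfl⟩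
  have hlower (t : WExp n) : lowerSpan K t ≤ S :=
    Submodule.span_mono (Set.image_subset_range _ _)
  have hmul : S * S ≤ S := by
    rw [Submodule.span_mul_span, Submodule.span_le]
    rintro _ ⟨_, ⟨s, rfl⟩, _, ⟨t, rfl⟩, rfl⟩
    obtain ⟨L, hL, hmul⟩ := hasLeadingExponent_wMono (K := K) s t
    change wMono n K s.1 s.2 * wMono n K t.1 t.2 ∈ S
    exact hmul ▸ add_mem (hmono _ _) (hlower _ hL)
  have hone : 1 ∈ S := wMono_zero_zero (K := K) (n := n) ▸ hmono 0 0
  have htop : S.toSubalgebra hone (fun _ _ hx hy => hmul (Submodule.mul_mem_mul hx hy)) = ⊤ := by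
    refine eq_top_iff.mpr <|
      (Algebra.adjoin_adjoin_coe_preimage (R := K) (s := weylGens n K)).ge.trans <|
        Algebra.adjoin_le ?_
    rintro D (⟨i, hi⟩ | ⟨i, hi⟩)
    · rw [← show wx n K i = D from Subtype.ext hi, ← wMono_single_zero]
      exact hmono _ _
    · rw [← show wd n K i = D from Subtype.ext hi, ← wMono_zero_single]
      exact hmono _ _
  exact congrArg Subalgebra.toSubmodule htop

end WeylAlgebra

section LexicographicKeys

variable {M : Type*} [AddMonoid M]

theorem map_add_left_lt_map_add_left {L : List (M →+ ℕ)} {s t : M} (q : M)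
    (h : (L.map fun φ => φ s) < L.map fun φ => φ t) :
    (L.map fun φ => φ (q + s)) < L.map fun φ => φ (q + t) := by
  induction L with
  | nil => exact absurd h (lt_irrefl _)
  | cons φ L ih =>
    simp only [List.map_cons, List.cons_lt_cons_iff, map_add, add_lt_add_iff_left,
      add_right_inj] at h ih ⊢
    exact h.imp_right (And.imp_right ih)

theorem map_append_lt_map_append {L L' : List (M →+ ℕ)} {s t : M}
    (hle : ∀ φ ∈ L, φ s ≤ φ t) (hlt : ∃ φ ∈ L, φ s < φ t) :
    ((L ++ L').map fun φ => φ s) < (L ++ L').map fun φ => φ t := by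
  induction L with
  | nil => simp at hlt
  | cons φ L ih =>
    simp only [List.mem_cons, forall_eq_or_imp, exists_eq_or_imp] at hle hlt
    simp only [List.cons_append, List.map_cons, List.cons_lt_cons_iff]
    rcases hle.1.lt_or_eq with h | h
    · exact Or.inl h
    · exact Or.inr ⟨h, ih hle.2 (hlt.resolve_left h.not_lt)⟩

end LexicographicKeys

section TermOrders

variable {n p m : ℕ}

/-- The `j`-th order of monomials as an additive map on exponents. -/
def ordBlkHom (B : Fin n → Fin p) (j : Fin p) : WExp n →+ ℕ where
  toFun t := ordBlk B t.1 t.2 j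
  map_zero' := by simp [ordBlk]
  map_add' s t := by
    simp only [ordBlk, ← Finset.sum_add_distrib]
    exact Finset.sum_congr rfl fun i _ => add_add_add_comm _ _ _ _

/-- The exponent of `x_i` as an additive map on exponents. -/
def xExpHom (i : Fin n) : WExp n →+ ℕ :=
  (Pi.evalAddMonoidHom _ i).comp (AddMonoidHom.fst _ _)

/-- The exponent of `∂_i` as an additive map on exponents. -/
def dExpHom (i : Fin n) : WExp n →+ ℕ :=
  (Pi.evalAddMonoidHom _ i).comp (AddMonoidHom.snd _ _)

/-- The entries of `keyList B j` that are orders. -/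
def ordKeys (B : Fin n → Fin p) (j : Fin p) : List (WExp n →+ ℕ) :=
  ordBlkHom B j :: ((List.finRange p).filter fun k => k ≠ j).map (ordBlkHom B)

/-- The entries of `keyList B j` that are exponents. -/
def expKeys (B : Fin n → Fin p) (j : Fin p) : List (WExp n →+ ℕ) :=
  ((List.finRange n).filter fun i => B i = j).map xExpHom ++
    ((List.finRange n).filter fun i => B i = j).map dExpHom ++
    (((List.finRange n).filter fun i => B i ≠ j).map fun i => [xExpHom i, dExpHom i]).flatten

variable (B : Fin n → Fin p) (j : Fin p)

theorem keyList_eq_map (t : WExp n) :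
    keyList B j t = (ordKeys B j ++ expKeys B j).map fun φ => φ t := by
  simp only [keyList, ordKeys, expKeys, List.map_append, List.map_map, List.map_flatten,
    List.map_cons, List.append_assoc, List.cons_append, List.nil_append]
  rfl

theorem ordBlkHom_mem_ordKeys (k : Fin p) : ordBlkHom B k ∈ ordKeys B j := by
  rcases eq_or_ne k j with rfl | h
  · exact List.mem_cons_self
  · exact List.mem_cons_of_mem _ (List.mem_map_of_mem (by simp [h]))

theorem exists_of_mem_ordKeys {φ : WExp n →+ ℕ} (h : φ ∈ ordKeys B j) :
    ∃ k, φ = ordBlkHom B k := by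
  simp only [ordKeys, List.mem_cons, List.mem_map] at h
  rcases h with rfl | ⟨k, -, rfl⟩
  exacts [⟨j, rfl⟩, ⟨k, rfl⟩]

theorem xExpHom_dExpHom_mem_expKeys (i : Fin n) :
    xExpHom i ∈ expKeys B j ∧ dExpHom i ∈ expKeys B j := by
  by_cases h : B i = j <;>
    simp only [expKeys, List.mem_append, List.mem_map, List.mem_flatten, List.mem_filter] <;>
    grind

theorem keyList_injective : Function.Injective (keyList B j) := fun s t h => by
  rw [keyList_eq_map, keyList_eq_map, List.map_inj_left] at h
  exact Prod.ext
    (funext fun i => h _ (List.mem_append_right _ (xExpHom_dExpHom_mem_expKeys B j i).1))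
    (funext fun i => h _ (List.mem_append_right _ (xExpHom_dExpHom_mem_expKeys B j i).2))

theorem keyList_add_lt_keyList_add {s t : WExp n} (q : WExp n)
    (h : keyList B j s < keyList B j t) : keyList B j (q + s) < keyList B j (q + t) := by
  rw [keyList_eq_map, keyList_eq_map] at h ⊢
  exact map_add_left_lt_map_add_left q h

theorem ordBlk_mono {s t : WExp n} (h : s.1 + s.2 ≤ t.1 + t.2) :
    ordBlk B s.1 s.2 j ≤ ordBlk B t.1 t.2 j :=
  Finset.sum_le_sum fun i _ => h i

theorem keyList_lt_of_add_lt {s t : WExp n} (h : s.1 + s.2 < t.1 + t.2) :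
    keyList B j s < keyList B j t := by
  rw [keyList_eq_map, keyList_eq_map]
  obtain ⟨hle, i, hi⟩ := Pi.lt_def.mp h
  refine map_append_lt_map_append (fun φ hφ => ?_)
    ⟨_, ordBlkHom_mem_ordKeys B j (B i), ?_⟩
  · obtain ⟨k, rfl⟩ := exists_of_mem_ordKeys B j hφ
    exact ordBlk_mono B k hle
  · have hsum : ordBlk B s.1 s.2 (B i) < ordBlk B t.1 t.2 (B i) :=
      Finset.sum_lt_sum (fun i _ => hle i) ⟨i, by simp, hi⟩
    exact hsum

/-- The comparison key of a term for `<_j`: the key of its monomial, then its generator. -/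
def termKey (t : WTerm n m) : List ℕ ×ₗ Fin m :=
  toLex (keyList B j t.1, t.2)

theorem termKey_injective : Function.Injective (termKey (m := m) B j) := fun _ _ h =>
  have h' := Prod.ext_iff.mp (toLex.injective h)
  Prod.ext (keyList_injective B j h'.1) h'.2

theorem termKey_lt_iff {s t : WTerm n m} :
    termKey B j s < termKey B j t ↔
      keyList B j s.1 < keyList B j t.1 ∨ s.1 = t.1 ∧ s.2 < t.2 := by
  rw [termKey, termKey, Prod.Lex.toLex_lt_toLex, (keyList_injective B j).eq_iff]

theorem termLt_iff_termKey_lt {s t : WTerm n m} :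
    termLt B j s t ↔ termKey B j s < termKey B j t :=
  (termKey_lt_iff B j).symm

theorem wellFounded_termKey_lt :
    WellFounded fun s t : WTerm n m => termKey B j s < termKey B j t := by
  -- All keys have the same length, so the lexicographic order agrees with the shortlex order.
  refine Subrelation.wf (fun {s t} h => ?_) <|
    InvImage.wf (fun t : WTerm n m => (keyList B j t.1, t.2)) <|
      (List.Shortlex.wf (wellFounded_lt (α := ℕ))).prod_lex (wellFounded_lt (α := Fin m))
  have hlength : (keyList B j s.1).length = (keyList B j t.1).length := by
    simp only [keyList_eq_map, List.length_map]
  rcases Prod.Lex.toLex_lt_toLex.mp h with h | h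
  · exact Prod.lex_def.mpr (Or.inl (List.Shortlex.of_lex hlength h))
  · exact Prod.lex_def.mpr (Or.inr h)

theorem termKey_lt_of_add_lt {s t : WTerm n m} (h : s.1.1 + s.1.2 < t.1.1 + t.1.2) :
    termKey B j s < termKey B j t :=
  (termKey_lt_iff B j).mpr (Or.inl (keyList_lt_of_add_lt B j h))

theorem ordT_mono {s t : WTerm n m} (h : termKey B j s ≤ termKey B j t) :
    ordT B j s ≤ ordT B j t := by
  rcases h.lt_or_eq with h | h
  · rcases (termKey_lt_iff B j).mp h with h | ⟨h, -⟩
    · exact List.head_le_of_lt h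
    · exact (congrArg (fun e : WExp n => ordBlk B e.1 e.2 j) h).le
  · rw [termKey_injective B j h]

/-- The product of a monomial and a term, up to lower terms. -/
def termShift (q : WExp n) (t : WTerm n m) : WTerm n m :=
  (q + t.1, t.2)

theorem termKey_shift_lt {s t : WTerm n m} (q : WExp n) (h : termKey B j s < termKey B j t) :
    termKey B j (termShift q s) < termKey B j (termShift q t) := by
  refine (termKey_lt_iff B j).mpr (((termKey_lt_iff B j).mp h).imp ?_ ?_)
  · exact keyList_add_lt_keyList_add B j q
  · exact And.imp_left (congrArg (q + ·))

theorem ordT_termShift (q : WExp n) (t : WTerm n m) :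
    ordT B j (termShift q t) = ordBlk B q.1 q.2 j + ordT B j t :=
  map_add (ordBlkHom B j) q t.1

theorem termShift_tquot {s t : WTerm n m} (h : tdvd s t) : termShift (tquot t s) s = t := by
  obtain ⟨hgen, hx, hd⟩ := h
  exact Prod.ext (Prod.ext (tsub_add_cancel_of_le hx) (tsub_add_cancel_of_le hd)) hgen

variable {K : Type} [Field K] {B j} {c : WTerm n m →₀ K}

theorem IsLeader.termKey_le {u t : WTerm n m} (hu : IsLeader B j c u) (ht : t ∈ c.support) :
    termKey B j t ≤ termKey B j u := by
  rcases eq_or_ne t u with rfl | hne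
  · exact le_rfl
  · exact ((termLt_iff_termKey_lt B j).mp (hu.2 t ht hne)).le

theorem IsLeader.ordT_le {u t : WTerm n m} (hu : IsLeader B j c u) (ht : t ∈ c.support) :
    ordT B j t ≤ ordT B j u :=
  ordT_mono B j (hu.termKey_le ht)

theorem exists_isLeader (B : Fin n → Fin p) (j : Fin p) (hc : c.support.Nonempty) :
    ∃ u, IsLeader B j c u := by
  obtain ⟨u, hu, hmax⟩ := c.support.exists_max_image (termKey B j) hc
  exact ⟨u, hu, fun t ht hne => (termLt_iff_termKey_lt B j).mpr <|
    (hmax t ht).lt_of_ne <| (termKey_injective B j).ne hne⟩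

end TermOrders

section TermExpansions

variable {n p m : ℕ} {K : Type} [Field K]

theorem represents_iff {c : WTerm n m →₀ K} {f : Fin m → WeylAlg n K} :
    Represents c f ↔ Finsupp.linearCombination K (termVal K) c = f :=
  eq_comm

theorem span_range_termVal :
    Submodule.span K (Set.range (termVal (n := n) (m := m) K)) = ⊤ := by
  refine eq_top_iff.mpr fun f _ => ?_
  have hsingle (i : Fin m) : (⊤ : Submodule K (WeylAlg n K)) ≤
      (Submodule.span K (Set.range (termVal (n := n) (m := m) K))).comap
        (LinearMap.single K (fun _ : Fin m => WeylAlg n K) i) := by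
    rw [← span_range_wMono, Submodule.span_le]
    rintro _ ⟨t, rfl⟩
    exact Submodule.subset_span ⟨(t, i), rfl⟩
  rw [← Finset.univ_sum_single f]
  exact Submodule.sum_mem _ fun i _ => hsingle i Submodule.mem_top

theorem exists_represents (f : Fin m → WeylAlg n K) : ∃ c : WTerm n m →₀ K, Represents c f := by
  obtain ⟨c, hc⟩ := Finsupp.mem_span_range_iff_exists_finsupp.mp
    (span_range_termVal (K := K) ▸ Submodule.mem_top : f ∈ Submodule.span K (Set.range _))
  exact ⟨c, hc.symm⟩

theorem Represents.linearCombination_erase {c : WTerm n m →₀ K} {f : Fin m → WeylAlg n K}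
    (hc : Represents c f) (t : WTerm n m) :
    f = c t • termVal K t + Finsupp.linearCombination K (termVal K) (c.erase t) := by
  rw [← Finsupp.linearCombination_single, ← map_add, Finsupp.single_add_erase]
  exact (represents_iff.mp hc).symm

/-- The terms below `u` for `<_k` whose `j`-th order is at most `d j` for every `j`: the shape of
the terms below the `k`-th leader `u` of an element whose `j`-th leader has `j`-th order `d j`. -/
def lowerTerms (B : Fin n → Fin p) (k : Fin p) (u : WTerm n m) (d : Fin p → ℕ) :
    Set (WTerm n m) :=
  {s | termKey B k s < termKey B k u ∧ ∀ j, ordT B j s ≤ d j}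

/-- The elements of the free module all of whose terms lie in `lowerTerms B k u d`. -/
noncomputable def lowerTermSpan (K : Type) [Field K] (B : Fin n → Fin p) (k : Fin p)
    (u : WTerm n m) (d : Fin p → ℕ) : Submodule K (Fin m → WeylAlg n K) :=
  Submodule.span K (termVal K '' lowerTerms B k u d)

variable (B : Fin n → Fin p) (k : Fin p)

theorem termVal_mem_lowerTermSpan {B : Fin n → Fin p} {k : Fin p} {s u : WTerm n m}
    {d : Fin p → ℕ} (h : s ∈ lowerTerms B k u d) : termVal K s ∈ lowerTermSpan K B k u d :=
  Submodule.subset_span ⟨s, h, rfl⟩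

theorem lowerTermSpan_mono {u v : WTerm n m} (d : Fin p → ℕ)
    (h : termKey B k u ≤ termKey B k v) :
    lowerTermSpan K B k u d ≤ lowerTermSpan K B k v d :=
  Submodule.span_mono <| Set.image_mono fun _ hs => ⟨hs.1.trans_le h, hs.2⟩

theorem exists_wMono_smul_termVal (q : WExp n) {t : WTerm n m} {d : Fin p → ℕ}
    (hd : ∀ j, ordT B j t ≤ d j) :
    ∃ z ∈ lowerTermSpan K B k (termShift q t) (ordBlk B q.1 q.2 + d),
      wMono n K q.1 q.2 • termVal K t = termVal K (termShift q t) + z := by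
  have hle : lowerSpan K (q + t.1) ≤
      (lowerTermSpan K B k (termShift q t) (ordBlk B q.1 q.2 + d)).comap
        (LinearMap.single K (fun _ : Fin m => WeylAlg n K) t.2) := by
    refine Submodule.span_le.mpr ?_
    rintro _ ⟨s, hs, rfl⟩
    have hord (j : Fin p) : ordT B j (s, t.2) ≤ ordBlk B q.1 q.2 j + d j :=
      calc
        ordT B j (s, t.2) ≤ ordT B j (termShift q t) := ordBlk_mono B j hs.le
        _ = ordBlk B q.1 q.2 j + ordT B j t := ordT_termShift B j q t
        _ ≤ ordBlk B q.1 q.2 j + d j := Nat.add_le_add_left (hd j) _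
    exact termVal_mem_lowerTermSpan (s := (s, t.2)) ⟨termKey_lt_of_add_lt B k hs, hord⟩
  obtain ⟨L, hL, hmul⟩ := hasLeadingExponent_wMono (K := K) q t.1
  refine ⟨Pi.single t.2 L, hle hL, ?_⟩
  rw [termVal, ← Pi.single_smul, smul_eq_mul, hmul, Pi.single_add]
  rfl

theorem wMono_smul_mem_lowerTermSpan (q : WExp n) {u : WTerm n m} {d : Fin p → ℕ}
    {z : Fin m → WeylAlg n K} (hz : z ∈ lowerTermSpan K B k u d) :
    wMono n K q.1 q.2 • z ∈
      lowerTermSpan K B k (termShift q u) (ordBlk B q.1 q.2 + d) := by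
  induction hz using Submodule.span_induction with
  | zero => rw [smul_zero]; exact zero_mem _
  | add x y _ _ hx hy => rw [smul_add]; exact add_mem hx hy
  | smul a x _ hx => rw [smul_comm]; exact Submodule.smul_mem _ a hx
  | mem x hx =>
    obtain ⟨t, ⟨hlt, hord⟩, rfl⟩ := hx
    obtain ⟨z, hz, hmul⟩ := exists_wMono_smul_termVal (K := K) B k q hord
    have hshift := termKey_shift_lt B k q hlt
    rw [hmul]
    refine add_mem (termVal_mem_lowerTermSpan ⟨hshift, fun j => ?_⟩)
      (lowerTermSpan_mono B k _ hshift.le hz)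
    exact (ordT_termShift B j q t).trans_le (Nat.add_le_add_left (hord j) _)

variable {B} {c : WTerm n m →₀ K} {g : Fin m → WeylAlg n K} {u : Fin p → WTerm n m}

theorem linearCombination_erase_mem_lowerTermSpan (hlead : ∀ j, IsLeader B j c (u j)) :
    Finsupp.linearCombination K (termVal K) (c.erase (u k)) ∈
      lowerTermSpan K B k (u k) fun j => ordT B j (u j) := by
  classical
  refine (Finsupp.mem_span_image_iff_linearCombination K).mpr
    ⟨c.erase (u k), fun t ht => ?_, rfl⟩
  rw [Finsupp.support_erase, Finset.mem_coe, Finset.mem_erase] at ht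
  exact ⟨(termLt_iff_termKey_lt B k).mp ((hlead k).2 t ht.2 ht.1), fun j => (hlead j).ordT_le ht.2⟩

theorem exists_wMono_smul_eq (hrep : Represents c g) (hlead : ∀ j, IsLeader B j c (u j))
    (q : WExp n) :
    ∃ z ∈ lowerTermSpan K B k (termShift q (u k)) fun j => ordBlk B q.1 q.2 j + ordT B j (u j),
      wMono n K q.1 q.2 • g = c (u k) • termVal K (termShift q (u k)) + z := by
  obtain ⟨z, hz, hmul⟩ := exists_wMono_smul_termVal (K := K) B k (t := u k) q
    fun j => (hlead j).ordT_le (hlead k).1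
  have hrest := wMono_smul_mem_lowerTermSpan B k q
    (linearCombination_erase_mem_lowerTermSpan k hlead)
  refine ⟨_, add_mem (Submodule.smul_mem _ (c (u k)) hz) hrest, ?_⟩
  rw [← add_assoc, ← smul_add, ← hmul, smul_comm, ← smul_add, ← hrep.linearCombination_erase]

end TermExpansions

section Reduction

variable {n p m : ℕ} {K : Type} [Field K] {B : Fin n → Fin p} {k : Fin p} {is : List (Fin p)}

/-- `w` is a term of the element represented by `c` that can be cancelled by a reduction step
modulo an element with leaders `u`. -/
def IsReducible (B : Fin n → Fin p) (k : Fin p) (is : List (Fin p)) (c : WTerm n m →₀ K)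
    (u : Fin p → WTerm n m) (w : WTerm n m) : Prop :=
  w ∈ c.support ∧ tdvd (u k) w ∧ ∀ i ∈ is, ∀ uf, IsLeader B i c uf →
    ordBlk B (tquot w (u k)).1 (tquot w (u k)).2 i + ordT B i (u i) ≤ ordT B i uf

theorem reducedWrt_iff_forall_not_isReducible {c : WTerm n m →₀ K} {u : Fin p → WTerm n m} :
    ReducedWrt B k is c u ↔ ∀ w, ¬ IsReducible B k is c u w := by
  simp only [ReducedWrt, IsReducible]
  push Not
  rfl

theorem IsReducible.of_ordT_le {c c' : WTerm n m →₀ K} {u : Fin p → WTerm n m} {w : WTerm n m}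
    (hw : IsReducible B k is c' u w) (hmem : w ∈ c.support)
    (hord : ∀ i ∈ is, ∀ uf, IsLeader B i c uf → ∀ s ∈ c'.support, ordT B i s ≤ ordT B i uf) :
    IsReducible B k is c u w := by
  refine ⟨hmem, hw.2.1, fun i hi uf huf => ?_⟩
  obtain ⟨uf', huf'⟩ := exists_isLeader B i ⟨w, hw.1⟩
  exact (hw.2.2 i hi uf' huf').trans (hord i hi uf huf uf' huf'.1)

theorem IsReducible.exists_cancel {c cg : WTerm n m →₀ K} {f g : Fin m → WeylAlg n K}
    {u : Fin p → WTerm n m} {w : WTerm n m} (hw : IsReducible B k is c u w)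
    (hc : Represents c f) (hcg : Represents cg g) (hlead : ∀ j, IsLeader B j cg (u j)) :
    ∃ (c' : WTerm n m →₀ K) (f' : Fin m → WeylAlg n K), Represents c' f' ∧
      (∃ D : WeylAlg n K, f = f' + D • g) ∧
      (∀ s ∈ c'.support, s ∈ c.support ∧ s ≠ w ∨ termKey B k s < termKey B k w) ∧
      ∀ i ∈ is, ∀ uf, IsLeader B i c uf → ∀ s ∈ c'.support, ordT B i s ≤ ordT B i uf := by
  classical
  set q := tquot w (u k)
  have hqw : termShift q (u k) = w := termShift_tquot hw.2.1
  obtain ⟨z, hz, hmul⟩ := exists_wMono_smul_eq k hcg hlead q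
  obtain ⟨e, he, rfl⟩ := (Finsupp.mem_span_image_iff_linearCombination K).mp hz
  rw [hqw] at he hmul
  have hne : cg (u k) ≠ 0 := Finsupp.mem_support_iff.mp (hlead k).1
  set a := c w / cg (u k)
  have hsupp (s : WTerm n m) (hs : s ∈ (c.erase w + (-a) • e).support) :
      s ∈ c.support ∧ s ≠ w ∨ s ∈ e.support := by
    refine (Finset.mem_union.mp (Finsupp.support_add hs)).imp (fun h => ?_)
      (fun h => Finsupp.support_smul h)
    rw [Finsupp.support_erase, Finset.mem_erase] at h
    exact h.symm
  refine ⟨c.erase w + (-a) • e, _, rfl, ⟨a • wMono n K q.1 q.2, ?_⟩, fun s hs => ?_,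
    fun i hi uf huf s hs => ?_⟩
  · change _ = Finsupp.linearCombination K (termVal K) _ + _
    rw [smul_assoc, hmul, smul_add, smul_smul, div_mul_cancel₀ _ hne, map_add, map_smul,
      add_add_add_comm, ← add_smul, neg_add_cancel, zero_smul, add_zero, add_comm]
    exact hc.linearCombination_erase w
  · exact (hsupp s hs).imp_right fun h => (he h).1
  · rcases hsupp s hs with h | h
    · exact huf.ordT_le h.1
    · exact ((he h).2 i).trans (hw.2.2 i hi uf huf)

/-- The terms of the element represented by `c` that are reducible modulo some member of a family
with leaders `u`. -/
def reducibleTerms {ι : Type*} (B : Fin n → Fin p) (k : Fin p) (is : List (Fin p))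
    (c : WTerm n m →₀ K) (u : ι → Fin p → WTerm n m) : Set (WTerm n m) :=
  {w | ∃ i, IsReducible B k is c (u i) w}

variable {ι : Type*} {g : ι → Fin m → WeylAlg n K} {cg : ι → WTerm n m →₀ K}
  {u : ι → Fin p → WTerm n m} {c : WTerm n m →₀ K}

theorem forall_reducedWrt_iff :
    (∀ i, ReducedWrt B k is c (u i)) ↔ reducibleTerms B k is c u = ∅ := by
  simp only [reducedWrt_iff_forall_not_isReducible, reducibleTerms, Set.eq_empty_iff_forall_notMem,
    Set.mem_ofPred_eq, not_exists]
  exact forall_comm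

theorem finite_reducibleTerms : (reducibleTerms B k is c u).Finite :=
  c.support.finite_toSet.subset fun _ ⟨_, hw⟩ => hw.1

theorem exists_reducibleTerms_lt (hrep : ∀ i, Represents (cg i) (g i))
    (hlead : ∀ i j, IsLeader B j (cg i) (u i j)) {f : Fin m → WeylAlg n K} (hc : Represents c f)
    {w : WTerm n m} (hw : w ∈ reducibleTerms B k is c u)
    (hmax : IsMaxOn (termKey B k) (reducibleTerms B k is c u) w) :
    ∃ (c' : WTerm n m →₀ K) (f' : Fin m → WeylAlg n K), Represents c' f' ∧
      (∃ z ∈ Submodule.span (WeylAlg n K) (Set.range g), f = f' + z) ∧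
      ∀ t ∈ reducibleTerms B k is c' u, termKey B k t < termKey B k w := by
  obtain ⟨i, hi⟩ := hw
  obtain ⟨c', f', hc', ⟨D, rfl⟩, hsupp, hord⟩ := hi.exists_cancel hc (hrep i) (hlead i)
  refine ⟨c', f', hc', ⟨D • g i, Submodule.smul_mem _ D (Submodule.subset_span ⟨i, rfl⟩), rfl⟩, ?_⟩
  rintro t ⟨i', ht⟩
  rcases hsupp t ht.1 with ⟨hmem, hne⟩ | hlt
  · exact (hmax ⟨i', ht.of_ordT_le hmem hord⟩).lt_of_ne ((termKey_injective B k).ne hne)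
  · exact hlt

end Reduction

theorem statement_15_general {n p m : ℕ} {K : Type} [Field K] {ι : Type*} (B : Fin n → Fin p)
    (k : Fin p) (is : List (Fin p)) (g : ι → Fin m → WeylAlg n K)
    (cg : ι → WTerm n m →₀ K) (ug : ι → Fin p → WTerm n m)
    (hrep : ∀ i, Represents (cg i) (g i)) (hlead : ∀ i j, IsLeader B j (cg i) (ug i j))
    (f : Fin m → WeylAlg n K) :
    ∃ h : Fin m → WeylAlg n K, f - h ∈ Submodule.span (WeylAlg n K) (Set.range g) ∧
      ∃ ch : WTerm n m →₀ K, Represents ch h ∧ ∀ i, ReducedWrt B k is ch (ug i) := by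
  by_contra hnot
  set N := Submodule.span (WeylAlg n K) (Set.range g)
  have hgreatest (h : Fin m → WeylAlg n K) (ch : WTerm n m →₀ K) (hfh : ∃ z ∈ N, f = h + z)
      (hch : Represents ch h) : ∃ w ∈ reducibleTerms B k is ch ug,
        IsMaxOn (termKey B k) (reducibleTerms B k is ch ug) w := by
    refine Set.exists_max_image _ (termKey B k) finite_reducibleTerms ?_
    refine Set.nonempty_iff_ne_empty.mpr fun hempty => hnot ?_
    obtain ⟨z, hz, hfz⟩ := hfh
    have hsub : f - h = z := sub_eq_of_eq_add' (G := Fin m → WeylAlg n K) hfz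
    exact ⟨h, hsub ▸ hz, ch, hch, forall_reducedWrt_iff.mpr hempty⟩
  set S := {w | ∃ h ch, (∃ z ∈ N, f = h + z) ∧ Represents ch h ∧ w ∈ reducibleTerms B k is ch ug ∧
    IsMaxOn (termKey B k) (reducibleTerms B k is ch ug) w}
  have hff : ∃ z ∈ N, f = f + z := ⟨0, zero_mem _, (add_zero f).symm⟩
  obtain ⟨cf, hcf⟩ := exists_represents f
  obtain ⟨w₀, hw₀⟩ := hgreatest f cf hff hcf
  obtain ⟨w, ⟨h, ch, ⟨z, hz, hfz⟩, hch, hw, hmax⟩, hmin⟩ :=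
    (wellFounded_termKey_lt B k).has_min S ⟨w₀, f, cf, hff, hcf, hw₀⟩
  obtain ⟨c', h', hc', ⟨z', hz', hhz⟩, hlt⟩ := exists_reducibleTerms_lt hrep hlead hch hw hmax
  have hfh' : ∃ z ∈ N, f = h' + z := ⟨z' + z, add_mem hz' hz, by rw [hfz, hhz, add_assoc]⟩
  obtain ⟨w', hw'⟩ := hgreatest h' c' hfh' hc'
  exact hmin w' ⟨h', c', hfh', hc', hw'⟩ (hlt w' hw'.1)

theorem statement_15 (n p m r : ℕ) (hp : 0 < p) (K : Type) [Field K] [CharZero K]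
    (nn : Fin p → ℕ) (hn : ∑ j, nn j = n)
    (B : Fin n → Fin p) (hBmono : Monotone B)
    (hBcard : ∀ j, (Finset.univ.filter fun i => B i = j).card = nn j)
    (g : Fin r → Fin m → WeylAlg n K) (hg0 : ∀ i, g i ≠ 0)
    (cg : Fin r → (WTerm n m →₀ K)) (ug : Fin r → Fin p → WTerm n m)
    (hrep : ∀ i, Represents (cg i) (g i))
    (hlead : ∀ i j, IsLeader B j (cg i) (ug i j))
    (f : Fin m → WeylAlg n K) :
    ∃ (h : Fin m → WeylAlg n K) (Q : Fin r → WeylAlg n K),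
      (f - h = ∑ i, fun j => Q i * g i j) ∧
      ∃ ch : WTerm n m →₀ K, Represents ch h ∧
        ∀ i, ReducedWrt B ⟨0, hp⟩ ((List.finRange p).tail) ch (ug i) := by
  obtain ⟨h, hmem, hred⟩ := statement_15_general B ⟨0, hp⟩ _ g cg ug hrep hlead f
  obtain ⟨Q, hQ⟩ := (Submodule.mem_span_range_iff_exists_fun _).mp hmem
  exact ⟨h, Q, hQ.symm, hred⟩
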